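/- Let (X,d) be a Polish space, f a continuous semi-flow on X, and x ∈ X a point whose motion is Lagrangian stable, i.e., Σ = closure(O₊(f,x)) is compact. Assume that the Birkhoff recurrent points of f lying in Σ are dense in Σ and that Σ is not minimal (there exists y ∈ Σ with closure(O₊(f,y)) ≠ Σ). Then there exists ε > 0 such that for every δ > 0 one can find y ∈ Σ with d(x,y) < δ and limsup_{t→+∞} d(f^t(x), f^t(y)) > ε. -/

import Mathlib

open Filter Topology Metric Set TopologicalSpace

/-- `f` is a continuous semi-flow on `X`: jointly continuous on `[0,∞) × X`,
`f 0 x = x`, and `f s (f t x) = f (s+t) x` for `s, t ≥ 0`. -/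
def IsSemiflow {X : Type*} [MetricSpace X] (f : ℝ → X → X) : Prop :=
  ContinuousOn (fun p : ℝ × X => f p.1 p.2) (Set.Ici 0 ×ˢ Set.univ) ∧
  (∀ x, f 0 x = x) ∧
  (∀ s t : ℝ, 0 ≤ s → 0 ≤ t → ∀ x, f s (f t x) = f (s + t) x)

/-- the forward orbit `O₊(f,x) = {f t x : t ≥ 0}`. -/
def posOrbit {X : Type*} [MetricSpace X] (f : ℝ → X → X) (x : X) : Set X :=
  (fun t => f t x) '' Set.Ici (0 : ℝ)

/-- `x` is Birkhoff recurrent for `f`. -/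
def BirkhoffRecurrent {X : Type*} [MetricSpace X] (f : ℝ → X → X) (x : X) : Prop :=
  ∀ ε > (0:ℝ), ∃ T > (0:ℝ), ∀ τ ≥ (0:ℝ), ∀ υ ≥ (0:ℝ),
    ∃ t : ℝ, τ < t ∧ t < τ + T ∧ dist (f υ x) (f t x) < ε

/-- `f` is topologically quasi-transitive: some forward orbit is dense. -/
def QuasiTransitive {X : Type*} [MetricSpace X] (f : ℝ → X → X) : Prop :=
  ∃ x : X, Dense (posOrbit f x)

/-- `(X,f)` is chaotic: quasi-transitive, Birkhoff recurrent points dense, and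
two motions far away from each other. -/
def Chaotic {X : Type*} [MetricSpace X] (f : ℝ → X → X) : Prop :=
  QuasiTransitive f ∧ Dense {x : X | BirkhoffRecurrent f x} ∧
  ∃ x y : X, closure (posOrbit f x) ∩ closure (posOrbit f y) = ∅

lemma IsSemiflow.cont {X : Type*} [MetricSpace X] {f : ℝ → X → X} (hf : IsSemiflow f) :
    Continuous (fun p : ℝ × X => f (max p.1 0) p.2) := by
  have h := hf.1.comp_continuous (f := fun p : ℝ × X => ((max p.1 0, p.2) : ℝ × X))
    (by fun_prop) (by intro p; simp)
  exact h

lemma IsSemiflow.cont_right {X : Type*} [MetricSpace X] {f : ℝ → X → X} (hf : IsSemiflow f)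
    {t : ℝ} (ht : 0 ≤ t) : Continuous (f t) := by
  have h := hf.cont.comp (Continuous.prodMk_right t)
  simpa [Function.comp_def, max_eq_left ht] using h

lemma closure_orbit_sub {X : Type*} [MetricSpace X] {f : ℝ → X → X} (hf : IsSemiflow f)
    {a b : X} (h : a ∈ closure (posOrbit f b)) :
    closure (posOrbit f a) ⊆ closure (posOrbit f b) := by
  refine closure_minimal ?_ isClosed_closure
  rintro _ ⟨t, ht, rfl⟩
  have ht' : (0:ℝ) ≤ t := ht
  refine map_mem_closure (hf.cont_right ht') h ?_
  rintro _ ⟨s, hs, rfl⟩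
  have hs' : (0:ℝ) ≤ s := hs
  exact ⟨t + s, add_nonneg ht' hs', (hf.2.2 t s ht' hs' b).symm⟩

lemma omega_mem {X : Type*} [MetricSpace X] {f : ℝ → X → X} (hf : IsSemiflow f) {x : X}
    (hrec : closure (posOrbit f x) ⊆
      closure ({z : X | BirkhoffRecurrent f z} ∩ closure (posOrbit f x)))
    {z₀ : X} (hz₀ : z₀ ∈ closure (posOrbit f x)) {U : Set X} (hU : IsOpen U) (hzU : z₀ ∈ U)
    (τ : ℝ) (hτ : 0 ≤ τ) : ∃ t, τ ≤ t ∧ f t x ∈ U := by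
  obtain ⟨z, hz, hzr, hzc⟩ := mem_closure_iff.1 (hrec hz₀) U hU hzU
  have hsplit : posOrbit f x ⊆ (fun t => f (max t 0) x) '' Icc 0 τ ∪ (fun t => f t x) '' Ici τ := by
    rintro _ ⟨t, ht, rfl⟩
    have ht' : (0:ℝ) ≤ t := ht
    rcases le_total t τ with h | h
    · exact Or.inl ⟨t, ⟨ht', h⟩, by simp [max_eq_left ht']⟩
    · exact Or.inr ⟨t, h, rfl⟩
  have hc : IsCompact ((fun t => f (max t 0) x) '' Icc 0 τ) :=
    isCompact_Icc.image (hf.cont.comp (Continuous.prodMk_left x))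
  have := closure_mono hsplit hzc
  rw [closure_union, hc.isClosed.closure_eq] at this
  rcases this with ⟨t, ht, rfl⟩ | h
  · obtain ⟨e, he, heU⟩ := Metric.isOpen_iff.1 hU _ hz
    obtain ⟨T, hT, h⟩ := hzr e he
    obtain ⟨t', h1, h2, h3⟩ := h τ hτ 0 le_rfl
    simp only [max_eq_left ht.1] at h3 heU
    rw [hf.2.1, hf.2.2 t' t (by linarith) ht.1] at h3
    exact ⟨t' + t, by linarith [ht.1], heU (by rw [mem_ball, dist_comm]; exact h3)⟩
  · obtain ⟨_, hw, t, ht, rfl⟩ := mem_closure_iff.1 h U hU hz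
    exact ⟨t, ht, hw⟩

/-- Theorem B: a chaotic Lagrangian stable motion is sensitive. -/
theorem thmB_sensitivity {X : Type*} [MetricSpace X] [CompleteSpace X]
    [SeparableSpace X] (f : ℝ → X → X) (hf : IsSemiflow f) (x : X)
    (hcpt : IsCompact (closure (posOrbit f x)))
    (hrec : closure (posOrbit f x) ⊆
      closure ({z : X | BirkhoffRecurrent f z} ∩ closure (posOrbit f x)))
    (hnm : ∃ y ∈ closure (posOrbit f x), closure (posOrbit f y) ≠ closure (posOrbit f x)) :
    ∃ ε : ℝ, 0 < ε ∧ ∀ δ > (0:ℝ), ∃ y ∈ closure (posOrbit f x), dist x y < δ ∧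
      (ε : EReal) <
        Filter.limsup (fun t : ℝ => (dist (f t x) (f t y) : EReal)) Filter.atTop := by
  obtain ⟨z₀, hz₀, hne⟩ := hnm
  have hx : x ∉ closure (posOrbit f z₀) := fun h =>
    hne ((closure_orbit_sub hf hz₀).antisymm (closure_orbit_sub hf h))
  rw [Metric.mem_closure_iff] at hx
  push Not at hx
  obtain ⟨r, hr, hx⟩ := hx
  have hxx : x ∈ closure (posOrbit f x) := subset_closure ⟨0, self_mem_Ici, hf.2.1 x⟩
  refine ⟨r / 8, by positivity, fun δ hδ => ?_⟩
  obtain ⟨y, ⟨hyr, hyc⟩, hxy⟩ := Metric.mem_closure_iff.1 (hrec hxx) (min δ (r/8))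
    (lt_min hδ (by positivity))
  refine ⟨y, hyc, hxy.trans_le (min_le_left _ _), ?_⟩
  have hxy' := hxy.trans_le (min_le_right _ _)
  by_contra hcon
  rw [not_lt] at hcon
  have hlt : Filter.limsup (fun t : ℝ => (dist (f t x) (f t y) : EReal)) Filter.atTop
      < ((r / 4 : ℝ) : EReal) :=
    hcon.trans_lt (EReal.coe_lt_coe_iff.2 (by linarith))
  have hev := Filter.eventually_lt_of_limsup_lt hlt
  obtain ⟨τ₀, hτ₀⟩ := Filter.eventually_atTop.1 hev
  obtain ⟨T, hT, hyT⟩ := hyr (r / 8) (by positivity)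
  have hopen : IsOpen {p : ℝ × X | dist (f (max p.1 0) p.2) (f (max p.1 0) z₀) < r / 2} :=
    isOpen_lt (hf.cont.dist (hf.cont.comp (by fun_prop : Continuous fun p : ℝ × X => (p.1, z₀))))
      continuous_const
  obtain ⟨u, v, hu, hv, hIu, hzv, huv⟩ := generalized_tube_lemma
    (isCompact_Icc (a := (0:ℝ)) (b := T)) (isCompact_singleton (x := z₀)) hopen (by
      rintro ⟨s, w⟩ ⟨_, hw⟩
      have : w = z₀ := hw
      subst this
      simp [hr])
  obtain ⟨t₁, ht₁, hv₁⟩ := omega_mem hf hrec hz₀ hv (hzv rfl) (max τ₀ 0) (le_max_right _ _)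
  have h0 : 0 ≤ t₁ := (le_max_right _ _).trans ht₁
  obtain ⟨t, h1, h2, h3⟩ := hyT t₁ h0 0 le_rfl
  have h4 : dist (f t x) (f t y) < r / 4 :=
    EReal.coe_lt_coe_iff.1 (hτ₀ t (((le_max_left _ _).trans ht₁).trans h1.le))
  have hs : 0 ≤ t - t₁ := by linarith
  have h5 := huv (show (t - t₁, f t₁ x) ∈ u ×ˢ v from ⟨hIu ⟨hs, by linarith⟩, hv₁⟩)
  simp only [mem_setOf_eq, max_eq_left hs] at h5
  rw [hf.2.2 _ _ hs h0, sub_add_cancel] at h5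
  have h6 := hx (f (t - t₁) z₀) ⟨t - t₁, hs, rfl⟩
  rw [hf.2.1] at h3
  have e1 := dist_triangle x (f t x) (f (t - t₁) z₀)
  have e2 := dist_triangle x y (f t x)
  have e3 := dist_triangle y (f t y) (f t x)
  rw [dist_comm (f t y)] at e3
  linarith
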